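/- Let G be a graph on n vertices with adjacency matrix A and stability number α(G), let k > 0 be a noninteger real scalar with α(G) > k, and let C > 0 be a real scalar. Then every local minimizer x̄ of the quadratic form q_{A,k}(x) := x^T (kA + kI - J) x over the polytope {x ∈ ℝ^n : x ≥ 0, Σ_{i=1}^n x_i ≤ C} satisfies Σ_{i=1}^n x̄_i = C. -/

import Mathlib

/-!
Suppose a local minimizer `x` of `q = q_{A,k}` had `∑ᵢ xᵢ < C`, so that only the sign constraints
can be active, and write `M = kA + kI - J` and `1_S` for the indicator vector of a stable set `S`.
The direction `1_S` is always feasible, and `q(1_S) = |S| (k - |S|)`. Hence if `1_Sᵀ M x = 0`, the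
second-order condition gives `|S| ≤ k`. At `x = 0` this contradicts `k < α(G)`. If `x ≠ 0`, take `S`
to be a maximal stable subset of the support of `x`. Then `-1_S` is feasible too, so
`1_Sᵀ M x = 0`. By maximality the closed neighbourhoods of `S` cover the support, so this equation
reads `|S| ∑ᵢ xᵢ = k ∑_{i ∈ S} ∑_{j ∈ N[i]} xⱼ ≥ k ∑ᵢ xᵢ`. Thus `|S| = k`, although `k` is not an
integer.
-/

open Matrix
open scoped RealInnerProductSpace

/-- The stability (independence) number of a graph: the size of the largest set of
pairwise non-adjacent vertices. -/
noncomputable def stabilityNumber {V : Type*} (G : SimpleGraph V) : ℕ :=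
  sSup {k | ∃ s : Finset V, s.card = k ∧ ∀ i ∈ s, ∀ j ∈ s, i ≠ j → ¬ G.Adj i j}

/-- The matrix `M_{A,k} = k A + k I - J`, where `J` is the all-ones matrix. -/
noncomputable def MAk {n : ℕ} (A : Matrix (Fin n) (Fin n) ℝ) (k : ℝ) : Matrix (Fin n) (Fin n) ℝ :=
  k • A + k • (1 : Matrix (Fin n) (Fin n) ℝ) - Matrix.of (fun _ _ => (1 : ℝ))

/-- Entrywise square of a vector. -/
def vsq {n : ℕ} (x : Fin n → ℝ) : Fin n → ℝ := fun i => (x i) ^ 2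

/-- A symmetric matrix `M` is copositive if `xᵀ M x ≥ 0` for all entrywise nonnegative `x`. -/
def Copositive {n : ℕ} (M : Matrix (Fin n) (Fin n) ℝ) : Prop :=
  ∀ x : Fin n → ℝ, (∀ i, 0 ≤ x i) → 0 ≤ x ⬝ᵥ M.mulVec x

/-- The quartic form `p_M(x) = (x²)ᵀ M (x²)`. -/
noncomputable def quarticForm {n : ℕ} (M : Matrix (Fin n) (Fin n) ℝ) :
    EuclideanSpace ℝ (Fin n) → ℝ :=
  fun x => vsq x ⬝ᵥ M.mulVec (vsq x)

/-- The quadratic form `q_M(x) = xᵀ M x`. -/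
noncomputable def quadForm {n : ℕ} (M : Matrix (Fin n) (Fin n) ℝ) :
    EuclideanSpace ℝ (Fin n) → ℝ :=
  fun x => x ⬝ᵥ M.mulVec x

/-- `xm` is a local minimizer of `f` over `Ω`: `xm ∈ Ω` and there is `ε > 0` such that
`f xm ≤ f x` for all `x ∈ Ω` with `‖x - xm‖ ≤ ε` (Euclidean norm). -/
def IsLocalMinimizer {n : ℕ} (f : EuclideanSpace ℝ (Fin n) → ℝ)
    (Ω : Set (EuclideanSpace ℝ (Fin n))) (xm : EuclideanSpace ℝ (Fin n)) : Prop :=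
  xm ∈ Ω ∧ ∃ ε > 0, ∀ x ∈ Ω, ‖x - xm‖ ≤ ε → f xm ≤ f x

/-- `xm` is a strict local minimizer of `f` over `Ω`: `xm ∈ Ω` and there is `ε > 0` such that
`f xm < f x` for all `x ∈ Ω` with `x ≠ xm` and `‖x - xm‖ ≤ ε` (Euclidean norm). -/
def IsStrictLocalMinimizer {n : ℕ} (f : EuclideanSpace ℝ (Fin n) → ℝ)
    (Ω : Set (EuclideanSpace ℝ (Fin n))) (xm : EuclideanSpace ℝ (Fin n)) : Prop :=
  xm ∈ Ω ∧ ∃ ε > 0, ∀ x ∈ Ω, x ≠ xm → ‖x - xm‖ ≤ ε → f xm < f x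

open Filter Topology

section FeasibleDirections

/-- `y` is a feasible direction of `Ω` at `x`: all sufficiently short steps from `x` along `y`
stay in `Ω`. -/
def IsFeasibleDirection {E : Type*} [AddCommGroup E] [Module ℝ E] (Ω : Set E) (x y : E) : Prop :=
  ∀ᶠ t : ℝ in 𝓝[>] 0, x + t • y ∈ Ω

variable {n : ℕ} {M : Matrix (Fin n) (Fin n) ℝ} {Ω : Set (EuclideanSpace ℝ (Fin n))}
  {x y : EuclideanSpace ℝ (Fin n)}

theorem IsLocalMinimizer.eventually_le_add_smul {f : EuclideanSpace ℝ (Fin n) → ℝ}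
    (h : IsLocalMinimizer f Ω x) (hy : IsFeasibleDirection Ω x y) :
    ∀ᶠ t : ℝ in 𝓝[>] 0, f x ≤ f (x + t • y) := by
  obtain ⟨-, ε, hε, hmin⟩ := h
  have htendsto : Tendsto (fun t : ℝ => ‖x + t • y - x‖) (𝓝[>] 0) (𝓝 0) :=
    tendsto_nhdsWithin_of_tendsto_nhds (Continuous.tendsto' (by fun_prop) _ _ (by simp))
  filter_upwards [hy, htendsto.eventually (ge_mem_nhds hε)] with t hmem hnorm
  exact hmin _ hmem hnorm

theorem quadForm_add_smul (hM : M.IsSymm) (x y : EuclideanSpace ℝ (Fin n)) (t : ℝ) :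
    quadForm M (x + t • y) = quadForm M x + t * (2 * (y ⬝ᵥ M *ᵥ x) + t * quadForm M y) := by
  have hsymm : x ⬝ᵥ M *ᵥ y = y ⬝ᵥ M *ᵥ x := by
    rw [← dotProduct_transpose_mulVec, hM.eq]
  simp only [quadForm, WithLp.ofLp_add, WithLp.ofLp_smul, mulVec_add, mulVec_smul, add_dotProduct,
    dotProduct_add, smul_dotProduct, dotProduct_smul, smul_eq_mul, hsymm]
  ring

theorem IsLocalMinimizer.eventually_two_mul_add_nonneg (hM : M.IsSymm)
    (h : IsLocalMinimizer (quadForm M) Ω x) (hy : IsFeasibleDirection Ω x y) :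
    ∀ᶠ t : ℝ in 𝓝[>] 0, 0 ≤ 2 * (y ⬝ᵥ M *ᵥ x) + t * quadForm M y := by
  filter_upwards [h.eventually_le_add_smul hy, self_mem_nhdsWithin] with t hle (ht : 0 < t)
  rw [quadForm_add_smul hM, le_add_iff_nonneg_right] at hle
  exact nonneg_of_mul_nonneg_right hle ht

theorem IsLocalMinimizer.dotProduct_mulVec_nonneg (hM : M.IsSymm)
    (h : IsLocalMinimizer (quadForm M) Ω x) (hy : IsFeasibleDirection Ω x y) :
    0 ≤ y ⬝ᵥ M *ᵥ x := by
  have htendsto : Tendsto (fun t : ℝ => 2 * (y ⬝ᵥ M *ᵥ x) + t * quadForm M y) (𝓝[>] 0)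
      (𝓝 (2 * (y ⬝ᵥ M *ᵥ x))) :=
    tendsto_nhdsWithin_of_tendsto_nhds (Continuous.tendsto' (by fun_prop) _ _ (by simp))
  linarith [ge_of_tendsto htendsto (h.eventually_two_mul_add_nonneg hM hy)]

theorem IsLocalMinimizer.dotProduct_mulVec_eq_zero (hM : M.IsSymm)
    (h : IsLocalMinimizer (quadForm M) Ω x) (hy : IsFeasibleDirection Ω x y)
    (hy' : IsFeasibleDirection Ω x (-y)) :
    y ⬝ᵥ M *ᵥ x = 0 := by
  have hneg := h.dotProduct_mulVec_nonneg hM hy'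
  rw [WithLp.ofLp_neg, neg_dotProduct, neg_nonneg] at hneg
  exact hneg.antisymm (h.dotProduct_mulVec_nonneg hM hy)

theorem IsLocalMinimizer.quadForm_nonneg (hM : M.IsSymm) (h : IsLocalMinimizer (quadForm M) Ω x)
    (hy : IsFeasibleDirection Ω x y) (hcrit : y ⬝ᵥ M *ᵥ x = 0) :
    0 ≤ quadForm M y := by
  obtain ⟨t, hnonneg, ht : 0 < t⟩ :=
    ((h.eventually_two_mul_add_nonneg hM hy).and self_mem_nhdsWithin).exists
  rw [hcrit, mul_zero, zero_add] at hnonneg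
  exact nonneg_of_mul_nonneg_right hnonneg ht

end FeasibleDirections

section TruncatedOrthant

variable {ι : Type*} [Fintype ι] {C : ℝ} {x y : EuclideanSpace ℝ ι}

/-- The polytope `{x : x ≥ 0, ∑ᵢ xᵢ ≤ C}` of the optimization problem. -/
def truncatedOrthant (ι : Type*) [Fintype ι] (C : ℝ) : Set (EuclideanSpace ℝ ι) :=
  {x | (∀ i, 0 ≤ x i) ∧ ∑ i, x i ≤ C}

theorem isFeasibleDirection_truncatedOrthant (hx : ∀ i, 0 ≤ x i) (hlt : ∑ i, x i < C)
    (hy : ∀ i, x i = 0 → 0 ≤ y i) :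
    IsFeasibleDirection (truncatedOrthant ι C) x y := by
  have hnonneg : ∀ᶠ t : ℝ in 𝓝[>] 0, ∀ i, 0 ≤ x i + t * y i := by
    refine eventually_all.2 fun i => ?_
    rcases (hx i).eq_or_lt' with hi | hi
    · filter_upwards [self_mem_nhdsWithin] with t (ht : 0 < t)
      simpa only [hi, zero_add] using mul_nonneg ht.le (hy i hi)
    · have htendsto : Tendsto (fun t : ℝ => x i + t * y i) (𝓝[>] 0) (𝓝 (x i)) :=
        tendsto_nhdsWithin_of_tendsto_nhds (Continuous.tendsto' (by fun_prop) _ _ (by simp))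
      exact htendsto.eventually (le_mem_nhds hi)
  have hsum : ∀ᶠ t : ℝ in 𝓝[>] 0, ∑ i, (x i + t * y i) ≤ C := by
    have htendsto : Tendsto (fun t : ℝ => ∑ i, (x i + t * y i)) (𝓝[>] 0) (𝓝 (∑ i, x i)) :=
      tendsto_nhdsWithin_of_tendsto_nhds (Continuous.tendsto' (by fun_prop) _ _ (by simp))
    exact htendsto.eventually (ge_mem_nhds hlt)
  exact hnonneg.and hsum

end TruncatedOrthant

section StableSets

theorem stabilityNumber_eq_indepNum {V : Type*} (G : SimpleGraph V) :
    stabilityNumber G = G.indepNum := by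
  simp only [stabilityNumber, SimpleGraph.indepNum, SimpleGraph.isNIndepSet_iff, Set.Pairwise,
    SetLike.mem_coe, and_comm]

theorem exists_isIndepSet_subset_dominating {V : Type*} (G : SimpleGraph V) (T : Finset V) :
    ∃ S ⊆ T, G.IsIndepSet S ∧ ∀ j ∈ T, ∃ i ∈ S, j = i ∨ G.Adj i j := by
  classical
  obtain ⟨S, hS⟩ := Finset.exists_maximal
    (s := T.powerset.filter fun S : Finset V => G.IsIndepSet S) ⟨∅, by simp⟩
  obtain ⟨hST, hindep⟩ : S ⊆ T ∧ G.IsIndepSet S := by simpa using hS.prop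
  refine ⟨S, hST, hindep, fun j hj => ?_⟩
  by_contra! hundominated
  have hinsert : G.IsIndepSet (insert j S : Finset V) := by
    rw [Finset.coe_insert]
    exact hindep.insert fun i hi _ =>
      ⟨fun hadj => (hundominated i hi).2 hadj.symm, (hundominated i hi).2⟩
  have hjS : j ∈ S := hS.le_of_ge
    (Finset.mem_filter.2 ⟨Finset.mem_powerset.2 (Finset.insert_subset hj hST), hinsert⟩)
    (Finset.subset_insert j S) (Finset.mem_insert_self j S)
  exact (hundominated j hjS).1 rfl

theorem sum_le_sum_sum_of_cover {ι α R : Type*} [AddCommMonoid R] [PartialOrder R]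
    [IsOrderedAddMonoid R] {x : α → R} (hx : ∀ a, 0 ≤ x a) {t : Finset α} {s : Finset ι}
    {N : ι → Finset α} (hcover : ∀ a ∈ t, ∃ i ∈ s, a ∈ N i) :
    ∑ a ∈ t, x a ≤ ∑ i ∈ s, ∑ a ∈ N i, x a := by
  classical
  calc ∑ a ∈ t, x a
      ≤ ∑ a ∈ t, ∑ i ∈ s with a ∈ N i, x a := Finset.sum_le_sum fun a ha => by
        obtain ⟨i, his, hai⟩ := hcover a ha
        exact Finset.single_le_sum (f := fun _ => x a) (fun _ _ => hx a)
          (Finset.mem_filter.2 ⟨his, hai⟩)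
    _ = ∑ i ∈ s, ∑ a ∈ t with a ∈ N i, x a := Finset.sum_comm' (by simp; tauto)
    _ ≤ ∑ i ∈ s, ∑ a ∈ N i, x a := Finset.sum_le_sum fun i _ =>
        Finset.sum_le_sum_of_subset_of_nonneg
          (fun _ ha => (Finset.mem_filter.1 ha).2) fun a _ _ => hx a

/-- The indicator vector `1_S` of a set `S` of coordinates. -/
noncomputable def indicatorVector {ι : Type*} [DecidableEq ι] (S : Finset ι) :
    EuclideanSpace ℝ ι :=
  WithLp.toLp 2 fun i => if i ∈ S then 1 else 0

theorem indicatorVector_apply {ι : Type*} [DecidableEq ι] (S : Finset ι) (i : ι) :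
    indicatorVector S i = if i ∈ S then 1 else 0 :=
  rfl

theorem indicatorVector_dotProduct {ι : Type*} [Fintype ι] [DecidableEq ι] (S : Finset ι)
    (v : ι → ℝ) : indicatorVector S ⬝ᵥ v = ∑ i ∈ S, v i := by
  simp [dotProduct, indicatorVector_apply]

end StableSets

section StableSetForm

variable {n : ℕ} {G : SimpleGraph (Fin n)} [DecidableRel G.Adj] {k C : ℝ} {S : Finset (Fin n)}
  {x : EuclideanSpace ℝ (Fin n)}

theorem MAk_isSymm {A : Matrix (Fin n) (Fin n) ℝ} (hA : A.IsSymm) (k : ℝ) : (MAk A k).IsSymm :=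
  ((hA.smul k).add (isSymm_one.smul k)).sub (IsSymm.ext fun _ _ => rfl)

theorem MAk_adjMatrix_mulVec_apply (x : Fin n → ℝ) (i : Fin n) :
    (MAk (G.adjMatrix ℝ) k *ᵥ x) i =
      k * ∑ j ∈ insert i (G.neighborFinset i), x j - ∑ j, x j := by
  have hones : (Matrix.of (fun _ _ => (1 : ℝ)) *ᵥ x) i = ∑ j, x j := by
    simp [mulVec, dotProduct]
  rw [Finset.sum_insert (G.notMem_neighborFinset_self i)]
  simp only [MAk, sub_mulVec, add_mulVec, smul_mulVec, one_mulVec, Pi.sub_apply, Pi.add_apply,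
    Pi.smul_apply, smul_eq_mul, SimpleGraph.adjMatrix_mulVec_apply, hones]
  ring

theorem indicatorVector_dotProduct_MAk_adjMatrix_mulVec (S : Finset (Fin n)) (x : Fin n → ℝ) :
    indicatorVector S ⬝ᵥ MAk (G.adjMatrix ℝ) k *ᵥ x =
      k * ∑ i ∈ S, ∑ j ∈ insert i (G.neighborFinset i), x j - S.card * ∑ j, x j := by
  simp only [indicatorVector_dotProduct, MAk_adjMatrix_mulVec_apply, Finset.sum_sub_distrib,
    Finset.mul_sum, Finset.sum_const, nsmul_eq_mul]

theorem quadForm_MAk_adjMatrix_indicatorVector (hS : G.IsIndepSet S) :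
    quadForm (MAk (G.adjMatrix ℝ) k) (indicatorVector S) = S.card * (k - S.card) := by
  have hclosed : ∀ i ∈ S,
      ∑ j ∈ insert i (G.neighborFinset i), indicatorVector S j = 1 := by
    intro i hi
    have hneighbors : ∀ j ∈ G.neighborFinset i, indicatorVector S j = 0 := by
      intro j hj
      have hadj : G.Adj i j := (G.mem_neighborFinset i j).1 hj
      exact if_neg fun hjS => hS hi hjS hadj.ne hadj
    rw [Finset.sum_insert (G.notMem_neighborFinset_self i), Finset.sum_eq_zero hneighbors,
      indicatorVector_apply, if_pos hi, add_zero]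
  have htotal : ∑ j, indicatorVector S j = S.card := by simp [indicatorVector_apply]
  rw [quadForm, indicatorVector_dotProduct_MAk_adjMatrix_mulVec, Finset.sum_congr rfl hclosed,
    htotal, Finset.sum_const, nsmul_one]
  ring

theorem card_le_of_isLocalMinimizer (hk : 0 ≤ k)
    (h : IsLocalMinimizer (quadForm (MAk (G.adjMatrix ℝ) k)) (truncatedOrthant (Fin n) C) x)
    (hlt : ∑ i, x i < C) (hS : G.IsIndepSet S)
    (hcrit : indicatorVector S ⬝ᵥ MAk (G.adjMatrix ℝ) k *ᵥ x = 0) :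
    (S.card : ℝ) ≤ k := by
  have hfeasible : IsFeasibleDirection (truncatedOrthant (Fin n) C) x (indicatorVector S) :=
    isFeasibleDirection_truncatedOrthant h.1.1 hlt fun i _ => by
      rw [indicatorVector_apply]; positivity
  have hcurv := h.quadForm_nonneg (MAk_isSymm G.isSymm_adjMatrix k) hfeasible hcrit
  rw [quadForm_MAk_adjMatrix_indicatorVector hS] at hcurv
  by_contra! hcard
  exact hcurv.not_gt (mul_neg_of_pos_of_neg (hk.trans_lt hcard) (sub_neg.2 hcard))

theorem indicatorVector_dotProduct_mulVec_eq_zero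
    (h : IsLocalMinimizer (quadForm (MAk (G.adjMatrix ℝ) k)) (truncatedOrthant (Fin n) C) x)
    (hlt : ∑ i, x i < C) (hS : ∀ i ∈ S, x i ≠ 0) :
    indicatorVector S ⬝ᵥ MAk (G.adjMatrix ℝ) k *ᵥ x = 0 := by
  have hvanish : ∀ i, x i = 0 → indicatorVector S i = 0 :=
    fun i hi => if_neg fun hiS => hS i hiS hi
  refine h.dotProduct_mulVec_eq_zero (MAk_isSymm G.isSymm_adjMatrix k)
    (isFeasibleDirection_truncatedOrthant h.1.1 hlt fun i hi => (hvanish i hi).ge)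
    (isFeasibleDirection_truncatedOrthant h.1.1 hlt fun i hi => ?_)
  rw [PiLp.neg_apply, hvanish i hi, neg_zero]

theorem le_card_of_dominating_support (hk : 0 ≤ k) (hx : ∀ i, 0 ≤ x i) (hpos : 0 < ∑ i, x i)
    (hdom : ∀ j, x j ≠ 0 → ∃ i ∈ S, j = i ∨ G.Adj i j)
    (hcrit : indicatorVector S ⬝ᵥ MAk (G.adjMatrix ℝ) k *ᵥ x = 0) :
    k ≤ S.card := by
  have hcover : ∑ j, x j ≤ ∑ i ∈ S, ∑ j ∈ insert i (G.neighborFinset i), x j := by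
    rw [← Finset.sum_filter_ne_zero]
    exact sum_le_sum_sum_of_cover hx (by simpa using hdom)
  rw [indicatorVector_dotProduct_MAk_adjMatrix_mulVec, sub_eq_zero] at hcrit
  exact le_of_mul_le_mul_right ((mul_le_mul_of_nonneg_left hcover hk).trans_eq hcrit) hpos

theorem exists_card_eq_of_isLocalMinimizer (hk : 0 ≤ k)
    (h : IsLocalMinimizer (quadForm (MAk (G.adjMatrix ℝ) k)) (truncatedOrthant (Fin n) C) x)
    (hlt : ∑ i, x i < C) (hpos : 0 < ∑ i, x i) :
    ∃ S : Finset (Fin n), G.IsIndepSet S ∧ (S.card : ℝ) = k := by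
  obtain ⟨S, hsupport, hindep, hdom⟩ :=
    exists_isIndepSet_subset_dominating G {i | x i ≠ 0}
  have hcrit := indicatorVector_dotProduct_mulVec_eq_zero h hlt fun i hi => by
    simpa using hsupport hi
  exact ⟨S, hindep, (card_le_of_isLocalMinimizer hk h hlt hindep hcrit).antisymm
    (le_card_of_dominating_support hk h.1.1 hpos (by simpa using hdom) hcrit)⟩

theorem stabilityNumber_le_of_isLocalMinimizer_zero (hk : 0 ≤ k) (hC : 0 < C)
    (h : IsLocalMinimizer (quadForm (MAk (G.adjMatrix ℝ) k)) (truncatedOrthant (Fin n) C) 0) :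
    (stabilityNumber G : ℝ) ≤ k := by
  obtain ⟨S, hS⟩ := G.exists_isNIndepSet_indepNum
  rw [stabilityNumber_eq_indepNum, ← hS.card_eq]
  exact card_le_of_isLocalMinimizer hk h (by simpa using hC) hS.isIndepSet (by simp)

end StableSetForm

/-- If `k > 0` is noninteger with `α(G) > k` and `C > 0`, then every local minimizer of
`q_{A,k}` over the polytope `{x : x ≥ 0, ∑ᵢ xᵢ ≤ C}` satisfies `∑ᵢ xᵢ = C`. -/
theorem localMinimizer_on_hyperplane {n : ℕ} (G : SimpleGraph (Fin n)) [DecidableRel G.Adj]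
    (k : ℝ) (hk : 0 < k) (hk' : ∀ m : ℤ, (m : ℝ) ≠ k) (hα : (stabilityNumber G : ℝ) > k)
    (C : ℝ) (hC : 0 < C) :
    ∀ xm, IsLocalMinimizer (quadForm (MAk (G.adjMatrix ℝ) k))
        {x : EuclideanSpace ℝ (Fin n) | (∀ i, 0 ≤ x i) ∧ ∑ i, x i ≤ C} xm →
      ∑ i, xm i = C := by
  intro xm h
  change IsLocalMinimizer _ (truncatedOrthant (Fin n) C) xm at h
  by_contra hne
  have hlt : ∑ i, xm i < C := h.1.2.lt_of_ne hne
  obtain rfl | hxm := eq_or_ne xm 0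
  · exact (stabilityNumber_le_of_isLocalMinimizer_zero hk.le hC h).not_gt hα
  · obtain ⟨i, hi⟩ : ∃ i, xm i ≠ 0 := by
      by_contra! hzero
      exact hxm (PiLp.ext hzero)
    have hpos : 0 < ∑ i, xm i :=
      Finset.sum_pos' (fun i _ => h.1.1 i) ⟨i, Finset.mem_univ i, (h.1.1 i).lt_of_ne' hi⟩
    obtain ⟨S, -, hcard⟩ := exists_card_eq_of_isLocalMinimizer hk.le h hlt hpos
    exact hk' S.card (mod_cast hcard)
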